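/- Abstract Bowen property estimate: let X be a compact metric space, f: X → X continuous, and φ: X → ℝ Hölder continuous with |φ(x) − φ(y)| ≤ K d(x,y)^β for all x,y (with K > 0, β ∈ (0,1]). Suppose C ≥ 1, θ, λ ∈ (0,1), η > 0, and 𝒢 ⊂ X × ℕ is a collection of orbit segments such that whenever (x,n) ∈ 𝒢 and max_{0≤k<n} d(f^k x, f^k y) < η, one has d(f^k x, f^k y) ≤ Cη(θ^{n−k} + λ^k) for all 0 ≤ k ≤ n. Then for every such (x,n) and y: |S_n φ(x) − S_n φ(y)| ≤ 2^{β+1} K (Cη)^β ∑_{j=0}^{∞} (max{θ, λ})^{jβ} < ∞, where S_n φ(x) = ∑_{k=0}^{n−1} φ(f^k x). -/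

import Mathlib

/-- The `n`-th Birkhoff sum of `φ` along the orbit of `x` under `f`. -/
noncomputable def birkhoff {X : Type*} (f : X → X) (φ : X → ℝ) (n : ℕ) (x : X) : ℝ :=
  ∑ k ∈ Finset.range n, φ (f^[k] x)

/-- Abstract Bowen property estimate: if `φ` is `(K,β)`-Hölder and along
orbit segments `(x,n) ∈ 𝒢`, points `η`-shadowing `x` for `n` iterates satisfy
`d(f^k x, f^k y) ≤ Cη(θ^{n-k} + λ^k)`, then the Birkhoff sums of `φ` along `(x,n)` and
along the shadowing orbit differ by at most `2^{β+1} K (Cη)^β ∑_j max(θ,λ)^{jβ}`. -/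
theorem abstract_bowen_estimate {X : Type*} [MetricSpace X] [CompactSpace X]
    (f : X → X) (hf : Continuous f)
    (φ : X → ℝ) (K β : ℝ) (hK : 0 < K) (hβ : 0 < β) (hβ' : β ≤ 1)
    (hHolder : ∀ x y : X, |φ x - φ y| ≤ K * dist x y ^ β)
    (C θ lam η : ℝ) (hC : 1 ≤ C)
    (hθ : θ ∈ Set.Ioo (0 : ℝ) 1) (hlam : lam ∈ Set.Ioo (0 : ℝ) 1) (hη : 0 < η)
    (G : Set (X × ℕ))
    (hG : ∀ x : X, ∀ n : ℕ, (x, n) ∈ G →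
      ∀ y : X, (∀ k < n, dist (f^[k] x) (f^[k] y) < η) →
        ∀ k ≤ n, dist (f^[k] x) (f^[k] y) ≤ C * η * (θ ^ (n - k) + lam ^ k)) :
    ∀ x : X, ∀ n : ℕ, (x, n) ∈ G →
      ∀ y : X, (∀ k < n, dist (f^[k] x) (f^[k] y) < η) →
        |birkhoff f φ n x - birkhoff f φ n y| ≤
          2 ^ (β + 1) * K * (C * η) ^ β * ∑' j : ℕ, (max θ lam) ^ ((j : ℝ) * β) := by
  intro x n hx y hy
  have hd := hG x n hx y hy
  obtain ⟨hθ0, hθ1⟩ := hθ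
  obtain ⟨hl0, hl1⟩ := hlam
  set m := max θ lam with hm
  have hm0 : 0 < m := lt_max_of_lt_left hθ0
  have hm1 : m < 1 := max_lt hθ1 hl1
  have hCη : 0 < C * η := mul_pos (by linarith) hη
  have hr0 : 0 < m ^ β := Real.rpow_pos_of_pos hm0 β
  have hr1 : m ^ β < 1 := Real.rpow_lt_one hm0.le hm1 hβ
  have hpow : ∀ j : ℕ, m ^ ((j : ℝ) * β) = (m ^ β) ^ j := by
    intro j
    rw [mul_comm, Real.rpow_mul hm0.le, Real.rpow_natCast]
  have hpow' : ∀ j : ℕ, (m ^ j) ^ β = (m ^ β) ^ j := by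
    intro j
    rw [← hpow, Real.rpow_mul hm0.le, Real.rpow_natCast]
  simp_rw [hpow]
  set r := m ^ β with hr
  have hsum : Summable (fun j : ℕ => r ^ j) := summable_geometric_of_lt_one hr0.le hr1
  have hS : ∑ k ∈ Finset.range n, r ^ k ≤ ∑' j : ℕ, r ^ j :=
    hsum.sum_le_tsum _ (fun j _ => by positivity)
  have hS' : ∑ k ∈ Finset.range n, r ^ (n - k) ≤ ∑' j : ℕ, r ^ j := by
    refine le_trans ?_ hS
    rw [← Finset.sum_range_reflect (fun k => r ^ k) n]
    refine Finset.sum_le_sum fun k hk => ?_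
    exact pow_le_pow_of_le_one hr0.le hr1.le (by omega)
  have hterm : ∀ k ∈ Finset.range n, |φ (f^[k] x) - φ (f^[k] y)| ≤
      K * (C * η) ^ β * (r ^ (n - k) + r ^ k) := by
    intro k hk
    have hk' : k ≤ n := (Finset.mem_range.mp hk).le
    have h1 : dist (f^[k] x) (f^[k] y) ≤ C * η * (m ^ (n - k) + m ^ k) := by
      refine (hd k hk').trans ?_
      have a1 : θ ^ (n - k) ≤ m ^ (n - k) := pow_le_pow_left₀ hθ0.le (le_max_left _ _) _
      have a2 : lam ^ k ≤ m ^ k := pow_le_pow_left₀ hl0.le (le_max_right _ _) _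
      gcongr
    have h2 : dist (f^[k] x) (f^[k] y) ^ β ≤ (C * η) ^ β * (r ^ (n - k) + r ^ k) := by
      refine (Real.rpow_le_rpow dist_nonneg h1 hβ.le).trans ?_
      rw [Real.mul_rpow hCη.le (by positivity), ← hpow', ← hpow']
      gcongr
      exact Real.rpow_add_le_add_rpow (by positivity) (by positivity) hβ.le hβ'
    calc _ ≤ _ := hHolder _ _
      _ ≤ K * ((C * η) ^ β * (r ^ (n - k) + r ^ k)) := by gcongr
      _ = _ := by ring
  have hA : 0 ≤ K * (C * η) ^ β := by positivity
  have hT : 0 ≤ ∑' j : ℕ, r ^ j := tsum_nonneg fun j => by positivity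
  have h2 : (2 : ℝ) ≤ 2 ^ (β + 1) := by
    calc (2 : ℝ) = 2 ^ (1 : ℝ) := by simp
      _ ≤ _ := Real.rpow_le_rpow_of_exponent_le (by norm_num) (by linarith)
  unfold birkhoff
  rw [← Finset.sum_sub_distrib]
  calc _ ≤ ∑ k ∈ Finset.range n, |φ (f^[k] x) - φ (f^[k] y)| := Finset.abs_sum_le_sum_abs _ _
    _ ≤ ∑ k ∈ Finset.range n, K * (C * η) ^ β * (r ^ (n - k) + r ^ k) := Finset.sum_le_sum hterm
    _ = K * (C * η) ^ β * (∑ k ∈ Finset.range n, r ^ (n - k) + ∑ k ∈ Finset.range n, r ^ k) := by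
      rw [← Finset.mul_sum, Finset.sum_add_distrib]
    _ ≤ K * (C * η) ^ β * (∑' j : ℕ, r ^ j + ∑' j : ℕ, r ^ j) := by gcongr
    _ = 2 * (K * (C * η) ^ β * ∑' j : ℕ, r ^ j) := by ring
    _ ≤ 2 ^ (β + 1) * (K * (C * η) ^ β * ∑' j : ℕ, r ^ j) := by gcongr
    _ = _ := by ring
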